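/- Let X ∈ ES and let γ ∨ (⋀_{i∈NI}⟨A_i⟩φ_i → ⋁_{j∈PI}⟨B_j⟩ψ_j) be a standard disjunction. If ⊨_XL γ ∨ (⋀_{i∈NI}⟨A_i⟩φ_i → ⋁_{j∈PI}⟨B_j⟩ψ_j), then the X-validity-reduction-condition holds: (1) ⊨_XL γ, or (2) both of the following: (a) if D ∉ X, then there are NI' ⊆ NI and j ∈ PI such that NI' is X-neat, ⋃_{i∈NI'} A_i ⊆ B_j, and ⊨_XL ⋀_{i∈NI'}φ_i → ψ_j; (b) if D ∈ X, then there are NI' ⊆ NI and j ∈ PI such that NI' is X-neat, ⋃_{i∈NI'} A_i ⊆ B_j, and ⊨_XL ⋀_{i∈NI'}φ_i → (ψ_j ∨ ⋁_{k∈PI₀}ψ_k), where PI₀ = { j ∈ PI : B_j = AG }. -/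

import Mathlib

/-! Suppose `γ` is refuted at some pointed X-model and every admissible pair `(N, j)` (`N` X-neat
and `⋃ i ∈ N, A_i ⊆ B_j`) has a pointed X-model refuting its reduced implication.  Put these models
side by side below a fresh root that is labelled so as to refute `γ`.  At the root every agent
supports one negative index or none, and casts a vote for a positive index.  The outcomes of a
profile are the chosen points of the models of `(N, j)`, where `N` consists of the `i` supported by
all of `A_i`, and where `D ∈ X` moreover forces `j` to be the sum of the votes.

If the members of `A_i` all support `i`, every outcome satisfies `φ_i`.  Against an action of `B_j`,
the agents outside withdraw their support, so that only `A_i ⊆ B_j` survive, and one of them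
corrects the sum of the votes to `j`; hence `ψ_j` fails at some outcome.  If nobody is outside, then
`B_j = AG`, and for `D ∈ X` every outcome refutes `ψ_j` anyway.  Only the votes of one outsider for
each `B_j ≠ AG` are counted, which keeps the sum finite. -/

namespace CL

/-- The language Φ of coalition logic over a set of agents, with atomic
propositions drawn from ℕ (a countable set). -/
inductive Formula (Agent : Type) : Type
  | top : Formula Agent
  | atom : ℕ → Formula Agent
  | neg : Formula Agent → Formula Agent
  | and : Formula Agent → Formula Agent → Formula Agent
  | coal : Set Agent → Formula Agent → Formula Agent

namespace Formula

variable {Agent : Type}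

def bot : Formula Agent := neg top

def or (φ ψ : Formula Agent) : Formula Agent := neg (and (neg φ) (neg ψ))

def imp (φ ψ : Formula Agent) : Formula Agent := or (neg φ) ψ

def iff (φ ψ : Formula Agent) : Formula Agent := and (imp φ ψ) (imp ψ φ)

end Formula

/-- The three frame properties: seriality, independence of agents, determinism.
`ES` is represented by `Set P3`, the eight subsets of {S, I, D}. -/
inductive P3 : Type
  | S | I | D
deriving DecidableEq
section
open Classical

/-- Merge of two joint actions of disjoint coalitions. -/
noncomputable def jaUnion {Agent Act : Type} {C D : Set Agent}
    (σC : C → Act) (σD : D → Act) : ↥(C ∪ D) → Act :=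
  fun a =>
    if h : a.1 ∈ C then σC ⟨a.1, h⟩
    else σD ⟨a.1, ((Set.mem_union _ _ _).mp a.2).resolve_left h⟩

end

/-- A general concurrent game frame: a nonempty set of states, a nonempty set
of actions, and an outcome function for the grand coalition.  Joint actions of
a coalition C are functions C → Act; action profiles are functions Agent → Act. -/
structure Frame (Agent : Type) where
  State : Type
  state_nonempty : Nonempty State
  Act : Type
  act_nonempty : Nonempty Act
  out : State → (Agent → Act) → Set State

namespace Frame

variable {Agent : Type} (F : Frame Agent)

/-- Outcome function for a coalition C. -/
def outC (C : Set Agent) (s : F.State) (σ : C → F.Act) : Set F.State :=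
  ⋃ (τ : Agent → F.Act) (_ : ∀ a : C, τ a.1 = σ a), F.out s τ

/-- Availability function: the available joint actions of C at s. -/
def aja (C : Set Agent) (s : F.State) : Set (C → F.Act) :=
  {σ | (F.outC C s σ).Nonempty}

def Serial : Prop := ∀ (s : F.State) (C : Set Agent), (F.aja C s).Nonempty

def Independent : Prop :=
  ∀ (s : F.State) (C D : Set Agent), C ∩ D = ∅ →
    ∀ σC ∈ F.aja C s, ∀ σD ∈ F.aja D s, jaUnion σC σD ∈ F.aja (C ∪ D) s

def Deterministic : Prop :=
  ∀ s : F.State, ∀ σ ∈ F.aja Set.univ s, ∃ t : F.State, F.outC Set.univ s σ = {t}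

end Frame

/-- A general concurrent game model: a frame together with a labeling function
(atomic propositions are drawn from the countable set ℕ). -/
structure Model (Agent : Type) extends Frame Agent where
  lab : State → Set ℕ

namespace Model

variable {Agent : Type} (M : Model Agent)

/-- Satisfaction: M, s ⊨ φ. -/
def sat : Formula Agent → M.State → Prop
  | .top, _ => True
  | .atom n, s => n ∈ M.lab s
  | .neg φ, s => ¬ sat φ s
  | .and φ ψ, s => sat φ s ∧ sat ψ s
  | .coal C φ, s => ∃ σ ∈ M.toFrame.aja C s, ∀ t ∈ M.toFrame.outC C s σ, sat φ t

/-- M is an X-model (for X ∈ ES). -/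
def IsX (X : Set P3) : Prop :=
  (P3.S ∈ X → M.toFrame.Serial) ∧ (P3.I ∈ X → M.toFrame.Independent) ∧
    (P3.D ∈ X → M.toFrame.Deterministic)

end Model

/-- φ is X-valid: φ holds at every pointed X-model. -/
def XValid {Agent : Type} (X : Set P3) (φ : Formula Agent) : Prop :=
  ∀ M : Model Agent, M.IsX X → ∀ s : M.State, M.sat φ s

/-- φ is X-satisfiable: φ holds at some pointed X-model. -/
def XSat {Agent : Type} (X : Set P3) (φ : Formula Agent) : Prop :=
  ∃ M : Model Agent, M.IsX X ∧ ∃ s : M.State, M.sat φ s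

/-- φ ⊨_XL ψ : ψ holds at every pointed X-model at which φ holds. -/
def XConseq {Agent : Type} (X : Set P3) (φ ψ : Formula Agent) : Prop :=
  ∀ M : Model Agent, M.IsX X → ∀ s : M.State, M.sat φ s → M.sat ψ s
def bigConj {Agent : Type} (l : List (Formula Agent)) : Formula Agent :=
  l.foldr Formula.and Formula.top

def bigDisj {Agent : Type} (l : List (Formula Agent)) : Formula Agent :=
  l.foldr Formula.or Formula.bot

inductive IsLiteral {Agent : Type} : Formula Agent → Prop
  | pos (n : ℕ) : IsLiteral (Formula.atom n)
  | neg (n : ℕ) : IsLiteral (Formula.neg (Formula.atom n))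

/-- An elementary disjunction: a disjunction of propositional literals. -/
inductive IsElemDisj {Agent : Type} : Formula Agent → Prop
  | lit {φ : Formula Agent} : IsLiteral φ → IsElemDisj φ
  | or {φ ψ : Formula Agent} : IsElemDisj φ → IsElemDisj ψ → IsElemDisj (φ.or ψ)

/-- An elementary conjunction: a conjunction of propositional literals. -/
inductive IsElemConj {Agent : Type} : Formula Agent → Prop
  | lit {φ : Formula Agent} : IsLiteral φ → IsElemConj φ
  | and {φ ψ : Formula Agent} : IsElemConj φ → IsElemConj ψ → IsElemConj (φ.and ψ)

/-- The data of a standard disjunction γ ∨ (⋀_{i∈NI}⟨A_i⟩φ_i → ⋁_{j∈PI}⟨B_j⟩ψ_j):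
NI is represented by `Fin n` (possibly empty) and PI by `Fin (m+1)` (nonempty);
(1) if NI ≠ ∅ then ⟨A_i⟩φ_i = ⟨∅⟩⊤ for some i ∈ NI, and (2) ⟨B_0⟩ψ_0 = ⟨AG⟩⊥. -/
structure StdDisj (Agent : Type) where
  γ : Formula Agent
  hγ : IsElemDisj γ
  n : ℕ
  m : ℕ
  A : Fin n → Set Agent
  φ : Fin n → Formula Agent
  B : Fin (m + 1) → Set Agent
  ψ : Fin (m + 1) → Formula Agent
  hNI : n ≠ 0 → ∃ i : Fin n, A i = ∅ ∧ φ i = Formula.top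
  hB0 : B 0 = Set.univ
  hψ0 : ψ 0 = Formula.bot

namespace StdDisj

variable {Agent : Type} (d : StdDisj Agent)

/-- The formula γ ∨ (⋀_{i∈NI}⟨A_i⟩φ_i → ⋁_{j∈PI}⟨B_j⟩ψ_j). -/
def toFormula : Formula Agent :=
  d.γ.or
    ((bigConj ((List.finRange d.n).map fun i => Formula.coal (d.A i) (d.φ i))).imp
      (bigDisj ((List.finRange (d.m + 1)).map fun j => Formula.coal (d.B j) (d.ψ j))))

/-- N ⊆ NI is X-neat. -/
def Neat (X : Set P3) (N : Finset (Fin d.n)) : Prop :=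
  (∀ i ∈ N, ∀ i' ∈ N, i ≠ i' → d.A i ∩ d.A i' = ∅) ∧
    (P3.S ∉ X → N.Nonempty) ∧
    (P3.I ∉ X → ∀ i ∈ N, ∀ i' ∈ N, d.A i ≠ ∅ → d.A i' ≠ ∅ → i = i')

/-- The set of basic positive indices `PI₀ = { j ∈ PI : B_j = AG }`. -/
noncomputable def PI0 : Finset (Fin (d.m + 1)) :=
  letI := Classical.decPred fun j : Fin (d.m + 1) => d.B j = Set.univ
  Finset.univ.filter fun j => d.B j = Set.univ

end StdDisj

theorem exists_finset_not_subset {ι α : Type*} [Finite ι] (B : ι → Set α) :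
    ∃ T : Finset α, ∀ j, B j ≠ Set.univ → ¬ (T : Set α) ⊆ B j := by
  have hsingle : ∀ j, ∃ T : Finset α, B j ≠ Set.univ → ¬ (T : Set α) ⊆ B j := fun j => by
    by_cases hj : B j = Set.univ
    · exact ⟨∅, absurd hj⟩
    · obtain ⟨b, hb⟩ := (Set.ne_univ_iff_exists_notMem _).1 hj
      exact ⟨{b}, fun _ => by simpa using hb⟩
  choose t ht using hsingle
  obtain ⟨T, hT⟩ := Finite.exists_le t
  exact ⟨T, fun j hj hsub => ht j hj ((Finset.coe_subset.2 (hT j)).trans hsub)⟩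

theorem exists_eqOn_sum_eq {α G : Type*} [AddCommGroup G] {T : Finset α} {C : Set α}
    (hT : ¬ (T : Set α) ⊆ C) (v : α → G) (g : G) :
    ∃ v' : α → G, Set.EqOn v' v C ∧ ∑ a ∈ T, v' a = g := by
  classical
  obtain ⟨b, hbT, hbC⟩ := Set.not_subset.1 hT
  refine ⟨v + Pi.single b (g - ∑ a ∈ T, v a), fun a ha => ?_, ?_⟩
  · simp [Pi.single_eq_of_ne (ne_of_mem_of_not_mem ha hbC)]
  · simp [Finset.sum_add_distrib, Finset.sum_pi_single', Finset.mem_coe.1 hbT]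

/-- The game played at a single state of a concurrent game frame: the set of outcomes, in `W`, of
each action profile.  A profile is available iff it has an outcome. -/
abbrev Game (Agent Act W : Type*) := (Agent → Act) → Set W

namespace Game

variable {Agent Act Act' W W' : Type*}

/-- The frame conditions in `X`, restricted to a single state and expressed by action profiles
rather than joint actions of coalitions. -/
def IsX (X : Set P3) (o : Game Agent Act W) : Prop :=
  (P3.S ∈ X → ∃ τ, (o τ).Nonempty) ∧
    (P3.I ∈ X → ∀ (C : Set Agent) (τ τ' ρ : Agent → Act), Set.EqOn ρ τ C → Set.EqOn ρ τ' Cᶜ →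
      (o τ).Nonempty → (o τ').Nonempty → (o ρ).Nonempty) ∧
    (P3.D ∈ X → ∀ τ, (o τ).Subsingleton)

/-- Effectivity: `C` has an available joint action all of whose outcomes lie in `P`.  The joint
action is represented by any available profile extending it. -/
def Effective (o : Game Agent Act W) (C : Set Agent) (P : Set W) : Prop :=
  ∃ τ, (o τ).Nonempty ∧ ∀ τ', Set.EqOn τ' τ C → o τ' ⊆ P

/-- The game `o` with its actions renamed along `f` and its outcomes along `g`. -/
def transport (f : Act' → Act) (g : W → W') (o : Game Agent Act W) : Game Agent Act' W' :=
  fun τ => g '' o (f ∘ τ)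

theorem IsX.transport {X : Set P3} {o : Game Agent Act W} (h : o.IsX X) {f : Act' → Act}
    (hf : Function.Surjective f) (g : W → W') : (o.transport f g).IsX X := by
  refine ⟨fun hS => ?_, fun hI C τ τ' ρ hτ hτ' hne hne' => ?_, fun hD τ => (h.2.2 hD _).image g⟩
  · obtain ⟨τ, hτ⟩ := h.1 hS
    obtain ⟨τ, rfl⟩ := hf.comp_left τ
    exact ⟨τ, hτ.image g⟩
  · exact (h.2.1 hI C _ _ _ hτ.comp_left hτ'.comp_left hne.of_image hne'.of_image).image g

theorem effective_transport_iff (o : Game Agent Act W) {f : Act' → Act}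
    (hf : Function.Surjective f) (g : W → W') (C : Set Agent) (P : Set W') :
    (o.transport f g).Effective C P ↔ o.Effective C (g ⁻¹' P) := by
  classical
  constructor
  · rintro ⟨τ, hτ, hP⟩
    refine ⟨f ∘ τ, hτ.of_image, fun υ hυ => ?_⟩
    obtain ⟨υ', rfl : f ∘ υ' = υ⟩ := hf.comp_left υ
    have hcomp : f ∘ C.piecewise τ υ' = f ∘ υ' := by
      funext a
      by_cases ha : a ∈ C
      · simpa [ha] using (hυ ha).symm
      · simp [ha]
    rw [← Set.image_subset_iff, ← hcomp]
    exact hP _ (C.piecewise_eqOn τ υ')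
  · rintro ⟨τ, hτ, hP⟩
    obtain ⟨τ, rfl⟩ := hf.comp_left τ
    exact ⟨τ, hτ.image g, fun υ hυ => Set.image_subset_iff.2 (hP _ hυ.comp_left)⟩

end Game

namespace Frame

variable {Agent : Type} {F : Frame Agent} {C : Set Agent} {s : F.State} {σ : C → F.Act}

theorem mem_outC {t : F.State} :
    t ∈ F.outC C s σ ↔ ∃ τ : Agent → F.Act, C.domRestrict τ = σ ∧ t ∈ F.out s τ := by
  simp [outC, funext_iff]

theorem mem_aja :
    σ ∈ F.aja C s ↔ ∃ τ : Agent → F.Act, C.domRestrict τ = σ ∧ (F.out s τ).Nonempty := by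
  simp only [aja, Set.mem_ofPred_eq, Set.Nonempty, mem_outC]
  exact ⟨fun ⟨t, τ, hτ, ht⟩ => ⟨τ, hτ, t, ht⟩, fun ⟨τ, hτ, t, ht⟩ => ⟨t, τ, hτ, ht⟩⟩

theorem outC_univ_domRestrict (s : F.State) (τ : Agent → F.Act) :
    F.outC Set.univ s (Set.univ.domRestrict τ) = F.out s τ := by
  ext t
  simp [mem_outC, Set.domRestrict_eq_domRestrict_iff, Set.eqOn_univ]

theorem serial_iff : F.Serial ↔ ∀ s, ∃ τ, (F.out s τ).Nonempty := by
  refine ⟨fun h s => ?_, fun h s C => ?_⟩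
  · obtain ⟨σ, hσ⟩ := h s ∅
    obtain ⟨τ, -, hτ⟩ := mem_aja.1 hσ
    exact ⟨τ, hτ⟩
  · obtain ⟨τ, hτ⟩ := h s
    exact ⟨C.domRestrict τ, mem_aja.2 ⟨τ, rfl, hτ⟩⟩

theorem independent_iff :
    F.Independent ↔ ∀ (s : F.State) (C : Set Agent) (τ τ' ρ : Agent → F.Act), Set.EqOn ρ τ C →
      Set.EqOn ρ τ' Cᶜ → (F.out s τ).Nonempty → (F.out s τ').Nonempty → (F.out s ρ).Nonempty := by
  classical
  refine ⟨fun h s C τ τ' ρ hτ hτ' hne hne' => ?_, fun h s C D _ σC hσC σD hσD => ?_⟩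
  · obtain ⟨υ, hυ, hneυ⟩ := mem_aja.1 (h s C Cᶜ C.inter_compl_self _ (mem_aja.2 ⟨τ, rfl, hne⟩) _
      (mem_aja.2 ⟨τ', rfl, hne'⟩))
    have hρ : ρ = υ := by
      funext a
      have ha : υ a = if a ∈ C then τ a else τ' a :=
        congrFun hυ ⟨a, C.union_compl_self.symm ▸ Set.mem_univ a⟩
      rw [ha]
      split_ifs with haC
      exacts [hτ haC, hτ' haC]
    exact hρ ▸ hneυ
  · obtain ⟨τ, rfl, hτ⟩ := mem_aja.1 hσC
    obtain ⟨τ', rfl, hτ'⟩ := mem_aja.1 hσD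
    refine mem_aja.2 ⟨C.piecewise τ τ', rfl, ?_⟩
    exact h s C τ τ' _ (C.piecewise_eqOn τ τ') (C.piecewise_eqOn_compl τ τ') hτ hτ'

theorem deterministic_iff : F.Deterministic ↔ ∀ s τ, (F.out s τ).Subsingleton := by
  refine ⟨fun h s τ => ?_, fun h s σ hσ => ?_⟩
  · rcases (F.out s τ).eq_empty_or_nonempty with hempty | hne
    · exact hempty ▸ Set.subsingleton_empty
    · obtain ⟨t, ht⟩ := h s _ (mem_aja.2 ⟨τ, rfl, hne⟩)
      rw [outC_univ_domRestrict] at ht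
      exact ht ▸ Set.subsingleton_singleton
  · obtain ⟨τ, rfl, t, ht⟩ := mem_aja.1 hσ
    exact ⟨t, (outC_univ_domRestrict s τ).trans ((h s τ).eq_singleton_of_mem ht)⟩

end Frame

namespace Model

variable {Agent : Type} {M : Model Agent}

theorem isX_iff {X : Set P3} : M.IsX X ↔ ∀ s, Game.IsX X (M.out s) := by
  simp only [IsX, Frame.serial_iff, Frame.independent_iff, Frame.deterministic_iff, Game.IsX]
  exact ⟨fun h s => ⟨fun hS => h.1 hS s, fun hI => h.2.1 hI s, fun hD => h.2.2 hD s⟩,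
    fun h => ⟨fun hS s => (h s).1 hS, fun hI s => (h s).2.1 hI, fun hD s => (h s).2.2 hD⟩⟩

theorem sat_coal {C : Set Agent} {φ : Formula Agent} {s : M.State} :
    M.sat (.coal C φ) s ↔ Game.Effective (M.out s) C {t | M.sat φ t} := by
  simp only [sat, Frame.mem_aja, Frame.mem_outC, Game.Effective,
    ← Set.domRestrict_eq_domRestrict_iff]
  constructor
  · rintro ⟨_, ⟨τ, rfl, hτ⟩, h⟩
    exact ⟨τ, hτ, fun τ' hτ' t ht => h t ⟨τ', hτ', ht⟩⟩
  · rintro ⟨τ, hτ, h⟩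
    exact ⟨_, ⟨τ, rfl, hτ⟩, fun t ⟨τ', hτ', ht⟩ => h τ' hτ' ht⟩

theorem sat_or {φ ψ : Formula Agent} {s : M.State} :
    M.sat (φ.or ψ) s ↔ M.sat φ s ∨ M.sat ψ s := by
  simp only [Formula.or, sat]
  tauto

theorem sat_imp {φ ψ : Formula Agent} {s : M.State} :
    M.sat (φ.imp ψ) s ↔ (M.sat φ s → M.sat ψ s) := by
  rw [Formula.imp, sat_or, sat, imp_iff_not_or]

theorem sat_bigConj {l : List (Formula Agent)} {s : M.State} :
    M.sat (bigConj l) s ↔ ∀ φ ∈ l, M.sat φ s := by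
  induction l with
  | nil => simp [bigConj, sat]
  | cons φ l ih => rw [List.forall_mem_cons, ← ih]; rfl

theorem sat_bigDisj {l : List (Formula Agent)} {s : M.State} :
    M.sat (bigDisj l) s ↔ ∃ φ ∈ l, M.sat φ s := by
  induction l with
  | nil => simp [bigDisj, Formula.bot, sat]
  | cons φ l ih => rw [List.exists_mem_cons_iff, ← ih]; exact sat_or

theorem sat_iff_of_isElemDisj {M' : Model Agent} {γ : Formula Agent} (hγ : IsElemDisj γ)
    {s : M.State} {s' : M'.State} (hlab : M.lab s = M'.lab s') : M.sat γ s ↔ M'.sat γ s' := by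
  induction hγ with
  | lit hφ => cases hφ <;> simp [sat, hlab]
  | or _ _ ihφ ihψ => rw [sat_or, sat_or, ihφ, ihψ]

section Glue

variable {ι Act₀ : Type} (M : ι → Model Agent)

theorem surjective_fst_glue_act :
    Function.Surjective (Prod.fst : (Act₀ × ∀ k, (M k).Act) → Act₀) :=
  fun x => ⟨(x, fun k => (M k).act_nonempty.some), rfl⟩

theorem surjective_eval_glue_act [Nonempty Act₀] (k : ι) :
    Function.Surjective fun x : Act₀ × ∀ k, (M k).Act => x.2 k := by
  have : ∀ k, Nonempty (M k).Act := fun k => (M k).act_nonempty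
  exact (Function.surjective_eval k).comp Prod.snd_surjective

variable [Nonempty Act₀] (w : ∀ k, (M k).State) (r : Game Agent Act₀ ι) (L : Set ℕ)

/-- The disjoint union of the models `M k` with a new root `none`, labelled `L`, at which the game
`r` is played; its outcome `k` stands for the point `w k` of `M k`.  An action consists of an action
for the root and one for each `M k`, of which only the one for the current component matters. -/
def glue : Model Agent where
  State := Option (Σ k, (M k).State)
  state_nonempty := ⟨none⟩
  Act := Act₀ × ∀ k, (M k).Act
  act_nonempty := ⟨Classical.arbitrary Act₀, fun k => (M k).act_nonempty.some⟩
  out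
    | none => r.transport Prod.fst fun k => some ⟨k, w k⟩
    | some ⟨k, s⟩ => Game.transport (fun x => x.2 k) (fun t => some ⟨k, t⟩) ((M k).out s)
  lab
    | none => L
    | some ⟨k, s⟩ => (M k).lab s

/-- The root of the glued model. -/
def glueRoot : (glue M w r L).State := none

/-- The copy in the glued model of the state `s` of `M k`. -/
def glueState (k : ι) (s : (M k).State) : (glue M w r L).State := some ⟨k, s⟩

theorem glue_isX {X : Set P3} (hM : ∀ k, (M k).IsX X) (hr : r.IsX X) :
    (glue M w r L).IsX X := by
  refine isX_iff.2 fun s => ?_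
  rcases s with _ | ⟨k, s⟩
  · exact hr.transport (surjective_fst_glue_act M) _
  · exact (isX_iff.1 (hM k) s).transport (surjective_eval_glue_act M k) _

theorem sat_glueState (φ : Formula Agent) (k : ι) (s : (M k).State) :
    (glue M w r L).sat φ (glueState M w r L k s) ↔ (M k).sat φ s := by
  induction φ generalizing s with
  | top => rfl
  | atom n => rfl
  | neg φ ih => simp only [sat, ih]
  | and φ ψ ihφ ihψ => simp only [sat, ihφ, ihψ]
  | coal C φ ih =>
    simp only [sat_coal, ← ih]
    exact Game.effective_transport_iff _ (surjective_eval_glue_act M k) _ C _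

theorem sat_coal_glueRoot (C : Set Agent) (φ : Formula Agent) :
    (glue M w r L).sat (.coal C φ) (glueRoot M w r L) ↔ r.Effective C {k | (M k).sat φ (w k)} := by
  simp only [sat_coal, ← sat_glueState M w r L φ]
  exact Game.effective_transport_iff _ (surjective_fst_glue_act M) _ C _

end Glue

end Model

namespace StdDisj

variable {Agent : Type} (d : StdDisj Agent)

theorem sat_toFormula {M : Model Agent} {s : M.State} :
    M.sat d.toFormula s ↔ M.sat d.γ s ∨
      ((∀ i, M.sat (.coal (d.A i) (d.φ i)) s) → ∃ j, M.sat (.coal (d.B j) (d.ψ j)) s) := by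
  simp [toFormula, Model.sat_or, Model.sat_imp, Model.sat_bigConj, Model.sat_bigDisj]

theorem Neat.subset {d : StdDisj Agent} {X : Set P3} {N N' : Finset (Fin d.n)} (hN : d.Neat X N)
    (hsub : N' ⊆ N) (hne : P3.S ∉ X → N'.Nonempty) : d.Neat X N' :=
  ⟨fun i hi i' hi' => hN.1 i (hsub hi) i' (hsub hi'), hne,
    fun hI i hi i' hi' => hN.2.2 hI i (hsub hi) i' (hsub hi')⟩

section Formed

open Classical in
/-- The negative indices `i` whose coalition `A_i` is formed when the agents support `σ`: all
members of `A_i` support `i`.  If `A_i = ∅`, this always holds. -/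
noncomputable def formed (σ : Agent → Option (Fin d.n)) : Finset (Fin d.n) :=
  {i | ∀ a ∈ d.A i, σ a = some i}

variable {d} {σ : Agent → Option (Fin d.n)} {X : Set P3}

theorem mem_formed {i : Fin d.n} : i ∈ d.formed σ ↔ ∀ a ∈ d.A i, σ a = some i := by
  simp [formed]

theorem formed_nonempty [Nonempty (Fin d.n)] : (d.formed σ).Nonempty := by
  obtain ⟨i, hi, -⟩ := d.hNI (Fin.pos_iff_nonempty.2 ‹_›).ne'
  exact ⟨i, by simp [mem_formed, hi]⟩

theorem neat_formed (hS : P3.S ∉ X → Nonempty (Fin d.n))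
    (hI : P3.I ∉ X → ∀ a a' i i', σ a = some i → σ a' = some i' → i = i') :
    d.Neat X (d.formed σ) := by
  refine ⟨fun i hi i' hi' hne => ?_, fun h => have := hS h; formed_nonempty,
    fun h i hi i' hi' hA hA' => ?_⟩
  · refine Set.eq_empty_of_forall_notMem fun a ha => hne ?_
    exact Option.some.inj ((mem_formed.1 hi a ha.1).symm.trans (mem_formed.1 hi' a ha.2))
  · obtain ⟨a, ha⟩ := Set.nonempty_iff_ne_empty.2 hA
    obtain ⟨a', ha'⟩ := Set.nonempty_iff_ne_empty.2 hA'
    exact hI h a a' i i' (mem_formed.1 hi a ha) (mem_formed.1 hi' a' ha')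

section Withdraw

variable (σ) (C : Set Agent) [∀ a, Decidable (a ∈ C)]

theorem iUnion_formed_piecewise_none_subset :
    ⋃ i ∈ d.formed (C.piecewise σ fun _ => none), d.A i ⊆ C := by
  refine Set.iUnion₂_subset fun i hi a ha => ?_
  by_contra haC
  simpa [haC] using mem_formed.1 hi a ha

theorem formed_piecewise_none_subset :
    d.formed (C.piecewise σ fun _ => none) ⊆ d.formed σ := by
  refine fun i hi => mem_formed.2 fun a ha => ?_
  have haC : a ∈ C := iUnion_formed_piecewise_none_subset σ C (Set.mem_biUnion hi ha)
  simpa [haC] using mem_formed.1 hi a ha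

end Withdraw

end Formed

/-- A pair of a negative index set and a positive index meeting the side conditions of the
X-validity-reduction-condition, in which only the validity of the reduced implication is left. -/
@[ext]
structure Reduct (X : Set P3) where
  N : Finset (Fin d.n)
  j : Fin (d.m + 1)
  neat : d.Neat X N
  iUnion_subset : ⋃ i ∈ N, d.A i ⊆ d.B j

namespace Reduct

variable {d} {X : Set P3}

/-- The indices of the disjuncts in the consequent of the reduced implication of `(N, j)`: only `j`
if `D ∉ X`, and `j` together with `PI₀` if `D ∈ X`. -/
def IsGoal (p : d.Reduct X) (k : Fin (d.m + 1)) : Prop :=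
  k = p.j ∨ P3.D ∈ X ∧ d.B k = Set.univ

end Reduct

section RootGame

open Classical in
/-- The positive index elected by a vote for `k` when `N` is formed.  A `k` that is not admissible
for `N` is replaced by `0`, which always is, as `B_0 = AG`. -/
noncomputable def elected (N : Finset (Fin d.n)) (k : Fin (d.m + 1)) : Fin (d.m + 1) :=
  if ⋃ i ∈ N, d.A i ⊆ d.B k then k else 0

theorem iUnion_subset_elected (N : Finset (Fin d.n)) (k : Fin (d.m + 1)) :
    ⋃ i ∈ N, d.A i ⊆ d.B (d.elected N k) := by
  unfold elected
  split_ifs with h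
  · exact h
  · exact d.hB0 ▸ Set.subset_univ _

/-- The game at the root of the countermodel.  Each agent supports a negative index, or none, and
votes for a positive index.  The votes of the agents in `T` are added up modulo `m + 1`, and they
matter only if the game has to be deterministic. -/
noncomputable def rootGame (X : Set P3) (T : Finset Agent) :
    Game Agent (Option (Fin d.n) × Fin (d.m + 1)) (d.Reduct X) :=
  fun τ => {p | p.N = d.formed (Prod.fst ∘ τ) ∧
    (P3.D ∈ X → p.j = d.elected p.N (∑ a ∈ T, (τ a).2))}

variable {d} {X : Set P3} {T : Finset Agent}

theorem rootGame_nonempty_iff {τ : Agent → Option (Fin d.n) × Fin (d.m + 1)} :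
    (d.rootGame X T τ).Nonempty ↔ d.Neat X (d.formed (Prod.fst ∘ τ)) :=
  ⟨fun ⟨p, hp, _⟩ => hp ▸ p.neat,
    fun h => ⟨⟨_, _, h, d.iUnion_subset_elected _ _⟩, rfl, fun _ => rfl⟩⟩

theorem rootGame_isX : (d.rootGame X T).IsX X := by
  refine ⟨fun hS => ⟨fun _ => (none, 0), ?_⟩, fun hI C τ τ' ρ _ _ hτ _ => ?_,
    fun hD τ p hp q hq => ?_⟩
  · exact rootGame_nonempty_iff.2 (neat_formed (absurd hS) (by simp))
  · have hneat := rootGame_nonempty_iff.1 hτ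
    exact rootGame_nonempty_iff.2 (neat_formed (fun hS => (hneat.2.1 hS).to_type) (absurd hI))
  · have hN : p.N = q.N := hp.1.trans hq.1.symm
    exact Reduct.ext hN (by rw [hp.2 hD, hq.2 hD, hN])

theorem rootGame_effective_A (i : Fin d.n) : (d.rootGame X T).Effective (d.A i) {p | i ∈ p.N} := by
  classical
  refine ⟨fun a => (if a ∈ d.A i then some i else none, 0), rootGame_nonempty_iff.2 ?_,
    fun τ hτ p hp => ?_⟩
  · refine neat_formed (fun _ => ⟨i⟩) fun _ a a' k k' hk hk' => ?_
    simp only [Function.comp_apply, Option.ite_none_right_eq_some, Option.some.injEq] at hk hk'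
    exact hk.2.symm.trans hk'.2
  · rw [Set.mem_ofPred_eq, hp.1, mem_formed]
    exact fun a ha => by simp [hτ ha, ha]

theorem exists_isGoal_of_rootGame_effective_B {j : Fin (d.m + 1)} {P : Set (d.Reduct X)}
    (hT : d.B j ≠ Set.univ → ¬ (T : Set Agent) ⊆ d.B j)
    (h : (d.rootGame X T).Effective (d.B j) P) : ∃ p ∈ P, p.IsGoal j := by
  classical
  obtain ⟨τ, ⟨q, hq⟩, hP⟩ := h
  by_cases hj : P3.D ∈ X ∧ d.B j = Set.univ
  · exact ⟨q, hP τ (Set.eqOn_refl _ _) hq, .inr hj⟩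
  obtain ⟨v, hv, hsum⟩ : ∃ v : Agent → Fin (d.m + 1),
      Set.EqOn v (fun a => (τ a).2) (d.B j) ∧ (P3.D ∈ X → ∑ a ∈ T, v a = j) := by
    by_cases hD : P3.D ∈ X
    · obtain ⟨v, hv, hsum⟩ := exists_eqOn_sum_eq (hT fun hB => hj ⟨hD, hB⟩) (fun a => (τ a).2) j
      exact ⟨v, hv, fun _ => hsum⟩
    · exact ⟨_, Set.eqOn_refl _ _, fun h => absurd h hD⟩
  let σ : Agent → Option (Fin d.n) := (d.B j).piecewise (Prod.fst ∘ τ) fun _ => none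
  have hneat : d.Neat X (d.formed σ) := by
    have hneatτ := rootGame_nonempty_iff.1 ⟨q, hq⟩
    exact hneatτ.subset (formed_piecewise_none_subset _ _) fun hS =>
      have := (hneatτ.2.1 hS).to_type
      formed_nonempty
  have hsub : ⋃ i ∈ d.formed σ, d.A i ⊆ d.B j := iUnion_formed_piecewise_none_subset _ _
  have hστ : Set.EqOn (fun a => (σ a, v a)) τ (d.B j) := fun a ha =>
    Prod.ext (by simp [σ, ha]) (hv ha)
  refine ⟨⟨d.formed σ, j, hneat, hsub⟩, hP _ hστ ⟨rfl, fun hD => ?_⟩, .inl rfl⟩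
  simp only [hsum hD, elected, if_pos hsub]

end RootGame

theorem exists_reduct_of_xValid {d : StdDisj Agent} {X : Set P3} (h : XValid X d.toFormula)
    (hγ : ¬ XValid X d.γ) :
    ∃ p : d.Reduct X, ∀ M : Model Agent, M.IsX X → ∀ s : M.State,
      (∀ i ∈ p.N, M.sat (d.φ i) s) → ∃ k, p.IsGoal k ∧ M.sat (d.ψ k) s := by
  by_contra! hrefuted
  choose M hM w hφ hψ using hrefuted
  obtain ⟨M₀, s₀, hs₀⟩ : ∃ M : Model Agent, ∃ s : M.State, ¬ M.sat d.γ s := by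
    by_contra! hall
    exact hγ fun M _ => hall M
  obtain ⟨T, hT⟩ := exists_finset_not_subset d.B
  let G := Model.glue M w (d.rootGame X T) (M₀.lab s₀)
  let root : G.State := Model.glueRoot M w (d.rootGame X T) (M₀.lab s₀)
  have hlab : G.lab root = M₀.lab s₀ := rfl
  have hroot : G.sat d.toFormula root := h G (Model.glue_isX M w _ _ hM rootGame_isX) root
  simp only [sat_toFormula, G, root, Model.sat_coal_glueRoot] at hroot
  rcases hroot with hγroot | himp
  · exact hs₀ ((Model.sat_iff_of_isElemDisj d.hγ hlab).1 hγroot)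
  · obtain ⟨j, hj⟩ := himp fun i =>
      let ⟨τ, hτ, hi⟩ := rootGame_effective_A i
      ⟨τ, hτ, fun τ' hτ' p hp => hφ p i (hi τ' hτ' hp)⟩
    obtain ⟨p, hp, hgoal⟩ := exists_isGoal_of_rootGame_effective_B (hT j) hj
    exact hψ p j hgoal hp

end StdDisj

theorem downward_validity_general {Agent : Type} (X : Set P3) (d : StdDisj Agent)
    (h : XValid X d.toFormula) :
    XValid X d.γ ∨
      ((P3.D ∉ X → ∃ (N' : Finset (Fin d.n)) (j : Fin (d.m + 1)),
          d.Neat X N' ∧ (⋃ i ∈ N', d.A i) ⊆ d.B j ∧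
          XValid X ((bigConj (N'.toList.map d.φ)).imp (d.ψ j))) ∧
        (P3.D ∈ X → ∃ (N' : Finset (Fin d.n)) (j : Fin (d.m + 1)),
          d.Neat X N' ∧ (⋃ i ∈ N', d.A i) ⊆ d.B j ∧
          XValid X ((bigConj (N'.toList.map d.φ)).imp
            ((d.ψ j).or (bigDisj (d.PI0.toList.map d.ψ)))))) := by
  refine or_iff_not_imp_left.2 fun hγ => ?_
  obtain ⟨p, hp⟩ := StdDisj.exists_reduct_of_xValid h hγ
  refine ⟨fun hD => ⟨p.N, p.j, p.neat, p.iUnion_subset, fun M hM s => ?_⟩,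
    fun hD => ⟨p.N, p.j, p.neat, p.iUnion_subset, fun M hM s => ?_⟩⟩
  · simpa [Model.sat_imp, Model.sat_bigConj, StdDisj.Reduct.IsGoal, hD] using hp M hM s
  · simpa [Model.sat_imp, Model.sat_bigConj, Model.sat_or, Model.sat_bigDisj, StdDisj.PI0,
      StdDisj.Reduct.IsGoal, hD, or_and_right, exists_or] using hp M hM s

/-- Downward validity lemma: if a standard disjunction
γ ∨ (⋀_{i∈NI}⟨A_i⟩φ_i → ⋁_{j∈PI}⟨B_j⟩ψ_j) is X-valid, then its
X-validity-reduction-condition is met. -/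
theorem downward_validity {Agent : Type} [Fintype Agent] (X : Set P3)
    (d : StdDisj Agent) (h : XValid X d.toFormula) :
    XValid X d.γ ∨
      ((P3.D ∉ X → ∃ (N' : Finset (Fin d.n)) (j : Fin (d.m + 1)),
          d.Neat X N' ∧ (⋃ i ∈ N', d.A i) ⊆ d.B j ∧
          XValid X ((bigConj (N'.toList.map d.φ)).imp (d.ψ j))) ∧
        (P3.D ∈ X → ∃ (N' : Finset (Fin d.n)) (j : Fin (d.m + 1)),
          d.Neat X N' ∧ (⋃ i ∈ N', d.A i) ⊆ d.B j ∧
          XValid X ((bigConj (N'.toList.map d.φ)).imp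
            ((d.ψ j).or (bigDisj (d.PI0.toList.map d.ψ)))))) :=
  downward_validity_general X d h

end CL
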